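/- arXiv:1207.0725 — 2 statements merged into one kernel-verified Lean document; each statement's English description precedes it below -/
import Mathlib

section
/- For every p > 0, ∫_0^1 [ 1 − ((1 − z)/(1 + z))^{p/2} · (1 + p·z + z²)/(1 − z²) ] · (dz/z) = ψ(p/4) − ψ(1/2) − 1 + 2/p, where ψ denotes the digamma function, ψ(x) := deriv (fun x => Real.log (Real.Gamma x)) x, i.e. the logarithmic derivative of the Gamma function. Equivalently, the normalisation constant A of the q = 1 stationary density satisfies 1/A = (1/2)·(ψ(p/4) − ψ(1/2))/(p/4 − 1/2) − 2/p when p ≠ 2. -/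
open intervalIntegral

/-- The digamma function: the logarithmic derivative of the Gamma function. -/
noncomputable def digamma (x : ℝ) : ℝ :=
  deriv (fun x => Real.log (Real.Gamma x)) x

/-!
Gauss' formula `ψ x - ψ y = ∫₀¹ (t ^ (y - 1) - t ^ (x - 1)) / (1 - t) dt` holds because both
`ψ` and `x ↦ ∫₀¹ (1 - t ^ (x - 1)) / (1 - t) dt` are monotone solutions of `f (x + 1) = f x + 1 / x`
on `(0, ∞)`. Such solutions agree up to an additive constant: as the increments `1 / x` tend to `0`,
monotonicity forces `f (u + d) - f u → 0` as `u → ∞` for each fixed `d ≥ 0`, while the difference of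
two solutions is `1`-periodic.

The substitution `t = ((1 - z) / (1 + z)) ^ 2` turns the normalisation integral into the integral of
Gauss' formula at `(x, y) = (p / 4, 1 / 2)` plus that of `(1 / 2 - p / 4) * t ^ (p / 4 - 1)`.
-/

open MeasureTheory Set Filter Topology

section DifferenceEquation

variable {f g φ : ℝ → ℝ} {a x y : ℝ}

lemma tendsto_add_natCast_sub_of_add_one (hfφ : ∀ x > a, f (x + 1) = f x + φ x)
    (hφ : Tendsto φ atTop (𝓝 0)) (k : ℕ) :
    Tendsto (fun u => f (u + k) - f u) atTop (𝓝 0) := by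
  induction k with
  | zero => simp
  | succ k ih =>
    have hφk : Tendsto (fun u : ℝ => φ (u + k)) atTop (𝓝 0) :=
      hφ.comp (tendsto_atTop_add_const_right _ _ tendsto_id)
    have hsum := ih.add hφk
    rw [add_zero] at hsum
    refine hsum.congr' ?_
    filter_upwards [eventually_gt_atTop a] with u hu
    have huk : a < u + k := hu.trans_le (by simp)
    rw [Nat.cast_succ, ← add_assoc, hfφ _ huk]
    ring

lemma tendsto_add_sub_of_monotoneOn_of_add_one (hf : MonotoneOn f (Ioi a))
    (hfφ : ∀ x > a, f (x + 1) = f x + φ x) (hφ : Tendsto φ atTop (𝓝 0)) {d : ℝ} (hd : 0 ≤ d) :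
    Tendsto (fun u => f (u + d) - f u) atTop (𝓝 0) := by
  refine squeeze_zero' ?_ ?_ (tendsto_add_natCast_sub_of_add_one hfφ hφ ⌈d⌉₊)
  all_goals filter_upwards [eventually_gt_atTop a] with u hu
  · exact sub_nonneg.2 (hf hu (hu.trans_le (by linarith)) (by linarith))
  · have hle : u + d ≤ u + ⌈d⌉₊ := by gcongr; exact Nat.le_ceil d
    have hua : a < u + d := by linarith
    exact sub_le_sub_right (hf hua (hua.trans_le hle) hle) _

lemma sub_add_natCast_eq_of_add_one (hfφ : ∀ x > a, f (x + 1) = f x + φ x)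
    (hgφ : ∀ x > a, g (x + 1) = g x + φ x) (hx : a < x) (n : ℕ) :
    f (x + n) - g (x + n) = f x - g x := by
  induction n with
  | zero => simp
  | succ n ih =>
    have hxn : a < x + n := hx.trans_le (by simp)
    rw [Nat.cast_succ, ← add_assoc, hfφ _ hxn, hgφ _ hxn, add_sub_add_right_eq_sub, ih]

theorem sub_eq_sub_of_monotoneOn_of_add_one (hf : MonotoneOn f (Ioi a))
    (hg : MonotoneOn g (Ioi a)) (hfφ : ∀ x > a, f (x + 1) = f x + φ x)
    (hgφ : ∀ x > a, g (x + 1) = g x + φ x) (hφ : Tendsto φ atTop (𝓝 0))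
    (hx : a < x) (hy : a < y) : f x - f y = g x - g y := by
  wlog hyx : y ≤ x generalizing x y
  · linarith [this hy hx (le_of_not_ge hyx)]
  have hlim : Tendsto (fun u => (f (u + (x - y)) - f u) - (g (u + (x - y)) - g u)) atTop (𝓝 0) := by
    simpa using (tendsto_add_sub_of_monotoneOn_of_add_one hf hfφ hφ (sub_nonneg.2 hyx)).sub
      (tendsto_add_sub_of_monotoneOn_of_add_one hg hgφ hφ (sub_nonneg.2 hyx))
  have hshift : Tendsto (fun n : ℕ => y + (n : ℝ)) atTop atTop :=
    tendsto_atTop_add_const_left _ _ tendsto_natCast_atTop_atTop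
  have hconst : (fun _ : ℕ => (f x - g x) - (f y - g y)) =
      (fun u => (f (u + (x - y)) - f u) - (g (u + (x - y)) - g u)) ∘ fun n : ℕ => y + (n : ℝ) := by
    funext n
    have hxn : y + n + (x - y) = x + n := by ring
    rw [Function.comp_apply, hxn, ← sub_add_natCast_eq_of_add_one hfφ hgφ hx n,
      ← sub_add_natCast_eq_of_add_one hfφ hgφ hy n]
    ring
  have hzero := hlim.comp hshift
  rw [← hconst, tendsto_const_nhds_iff] at hzero
  linarith

end DifferenceEquation

section Digamma

variable {x : ℝ}

lemma differentiableAt_log_Gamma (hx : 0 < x) :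
    DifferentiableAt ℝ (fun x => Real.log (Real.Gamma x)) x := by
  refine (Real.differentiableAt_Gamma fun m => ?_).log (Real.Gamma_pos_of_pos hx).ne'
  exact ((neg_nonpos.2 m.cast_nonneg).trans_lt hx).ne'

lemma monotoneOn_digamma : MonotoneOn digamma (Ioi 0) :=
  Real.convexOn_log_Gamma.monotoneOn_deriv fun _ hx => differentiableAt_log_Gamma hx

lemma digamma_add_one (hx : 0 < x) : digamma (x + 1) = digamma x + 1 / x := by
  have hlog : (fun y => Real.log (Real.Gamma (y + 1))) =ᶠ[𝓝 x]
      fun y => Real.log (Real.Gamma y) + Real.log y := by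
    filter_upwards [lt_mem_nhds hx] with y hy
    rw [Real.Gamma_add_one hy.ne', Real.log_mul hy.ne' (Real.Gamma_pos_of_pos hy).ne', add_comm]
  calc digamma (x + 1) = deriv (fun y => Real.log (Real.Gamma (y + 1))) x :=
        (deriv_comp_add_const (fun y => Real.log (Real.Gamma y)) 1 x).symm
    _ = deriv (fun y => Real.log (Real.Gamma y) + Real.log y) x := hlog.deriv_eq
    _ = digamma x + 1 / x := by
        rw [deriv_fun_add (differentiableAt_log_Gamma hx) (Real.differentiableAt_log hx.ne'),
          Real.deriv_log, one_div, digamma]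

end Digamma

section GaussIntegral

variable {x y t : ℝ}

/-- The integrand `(1 - t ^ (x - 1)) / (1 - t)` of Gauss' integral for the digamma function. -/
noncomputable def gaussKernel (x t : ℝ) : ℝ := (1 - t ^ (x - 1)) / (1 - t)

/-- Gauss' integral `∫₀¹ (1 - t ^ (x - 1)) / (1 - t) dt`, which equals `ψ x - ψ 1` for `x > 0`. -/
noncomputable def gaussIntegral (x : ℝ) : ℝ := ∫ t in (0 : ℝ)..1, gaussKernel x t

lemma gaussKernel_add_one (ht : t ∈ Ioo (0 : ℝ) 1) :
    gaussKernel (x + 1) t = gaussKernel x t + t ^ (x - 1) := by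
  have h1 : 1 - t ≠ 0 := (sub_pos.2 ht.2).ne'
  have hpow : t ^ (x + 1 - 1) = t ^ (x - 1) * t := by
    rw [← Real.rpow_add_one ht.1.ne']
    ring_nf
  rw [gaussKernel, gaussKernel, hpow]
  field_simp
  ring

lemma monotone_gaussKernel (ht : t ∈ Ioo (0 : ℝ) 1) : Monotone fun x => gaussKernel x t := by
  intro x y hxy
  have hpow : t ^ (y - 1) ≤ t ^ (x - 1) :=
    Real.rpow_le_rpow_of_exponent_ge ht.1 ht.2.le (by linarith)
  have h1 : 0 ≤ 1 - t := (sub_pos.2 ht.2).le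
  simp only [gaussKernel]
  gcongr

lemma one_sub_rpow_le_max_mul (ht : t ∈ Ioc (0 : ℝ) 1) :
    1 - t ^ x ≤ max 1 x * (1 - t) := by
  have hbernoulli := one_add_mul_self_le_rpow_one_add (s := t - 1) (by linarith [ht.1])
    (le_max_left 1 x)
  rw [add_sub_cancel] at hbernoulli
  have hpow : t ^ max 1 x ≤ t ^ x := Real.rpow_le_rpow_of_exponent_ge ht.1 ht.2 (le_max_right 1 x)
  linarith

lemma norm_gaussKernel_le (hx : 1 ≤ x) (ht : t ∈ Ioo (0 : ℝ) 1) :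
    ‖gaussKernel x t‖ ≤ max 1 (x - 1) := by
  have h1 : 0 < 1 - t := sub_pos.2 ht.2
  have hpow : t ^ (x - 1) ≤ 1 := Real.rpow_le_one ht.1.le ht.2.le (by linarith)
  rw [gaussKernel, Real.norm_of_nonneg (div_nonneg (by linarith) h1.le), div_le_iff₀ h1]
  exact one_sub_rpow_le_max_mul ⟨ht.1, ht.2.le⟩

lemma intervalIntegrable_gaussKernel_of_one_le (hx : 1 ≤ x) :
    IntervalIntegrable (gaussKernel x) volume 0 1 := by
  rw [intervalIntegrable_iff_integrableOn_Ioo_of_le zero_le_one]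
  refine Measure.integrableOn_of_bounded (M := max 1 (x - 1)) (by simp) ?_ ?_
  · exact Measurable.aestronglyMeasurable (by unfold gaussKernel; fun_prop)
  · exact ae_restrict_of_forall_mem measurableSet_Ioo fun t ht => norm_gaussKernel_le hx ht

lemma intervalIntegrable_rpow_sub_one (hx : 0 < x) :
    IntervalIntegrable (fun t : ℝ => t ^ (x - 1)) volume 0 1 :=
  intervalIntegrable_rpow' (by linarith)

lemma integral_rpow_sub_one (hx : 0 < x) : ∫ t in (0 : ℝ)..1, t ^ (x - 1) = 1 / x := by
  rw [integral_rpow (Or.inl (by linarith)), sub_add_cancel, Real.one_rpow,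
    Real.zero_rpow hx.ne', sub_zero]

lemma intervalIntegrable_gaussKernel (hx : 0 < x) :
    IntervalIntegrable (gaussKernel x) volume 0 1 := by
  have hint := (intervalIntegrable_gaussKernel_of_one_le (x := x + 1) (by linarith)).sub
    (intervalIntegrable_rpow_sub_one hx)
  refine hint.congr_uIoo fun t ht => ?_
  rw [uIoo_of_le zero_le_one] at ht
  exact sub_eq_of_eq_add (gaussKernel_add_one ht)

lemma monotoneOn_gaussIntegral : MonotoneOn gaussIntegral (Ioi 0) := fun _ hx _ hy hxy =>
  integral_mono_on_of_le_Ioo zero_le_one (intervalIntegrable_gaussKernel hx)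
    (intervalIntegrable_gaussKernel hy) fun _ ht => monotone_gaussKernel ht hxy

lemma gaussIntegral_add_one (hx : 0 < x) : gaussIntegral (x + 1) = gaussIntegral x + 1 / x := by
  calc gaussIntegral (x + 1) = ∫ t in (0 : ℝ)..1, (gaussKernel x t + t ^ (x - 1)) :=
        integral_congr_Ioo_of_le zero_le_one fun _ ht => gaussKernel_add_one ht
    _ = gaussIntegral x + 1 / x := by
        rw [integral_add (intervalIntegrable_gaussKernel hx) (intervalIntegrable_rpow_sub_one hx),
          integral_rpow_sub_one hx, gaussIntegral]

lemma gaussKernel_sub_gaussKernel :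
    gaussKernel x t - gaussKernel y t = (t ^ (y - 1) - t ^ (x - 1)) / (1 - t) := by
  rw [gaussKernel, gaussKernel, ← sub_div, sub_sub_sub_cancel_left]

lemma intervalIntegrable_rpow_sub_rpow_div_one_sub (hx : 0 < x) (hy : 0 < y) :
    IntervalIntegrable (fun t : ℝ => (t ^ (y - 1) - t ^ (x - 1)) / (1 - t)) volume 0 1 := by
  simpa only [gaussKernel_sub_gaussKernel] using
    (intervalIntegrable_gaussKernel hx).sub (intervalIntegrable_gaussKernel hy)

theorem digamma_sub_digamma_eq_integral (hx : 0 < x) (hy : 0 < y) :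
    digamma x - digamma y = ∫ t in (0 : ℝ)..1, (t ^ (y - 1) - t ^ (x - 1)) / (1 - t) := by
  calc digamma x - digamma y = gaussIntegral x - gaussIntegral y :=
        sub_eq_sub_of_monotoneOn_of_add_one monotoneOn_digamma monotoneOn_gaussIntegral
          (fun _ => digamma_add_one) (fun _ => gaussIntegral_add_one)
          (tendsto_const_nhds.div_atTop tendsto_id) hx hy
    _ = ∫ t in (0 : ℝ)..1, (gaussKernel x t - gaussKernel y t) :=
        (integral_sub (intervalIntegrable_gaussKernel hx)
          (intervalIntegrable_gaussKernel hy)).symm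
    _ = _ := by simp only [gaussKernel_sub_gaussKernel]

end GaussIntegral

section CayleySubstitution

variable {z t : ℝ}

lemma hasDerivAt_cayley_sq (hz : 1 + z ≠ 0) :
    HasDerivAt (fun z : ℝ => ((1 - z) / (1 + z)) ^ 2) (-(4 * (1 - z) / (1 + z) ^ 3)) z := by
  have hcayley : HasDerivAt (fun z : ℝ => (1 - z) / (1 + z))
      ((-1 * (1 + z) - (1 - z) * 1) / (1 + z) ^ 2) z :=
    ((hasDerivAt_id z).const_sub 1).div ((hasDerivAt_id z).const_add 1) hz
  refine (hcayley.pow 2).congr_deriv ?_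
  rw [Nat.cast_ofNat, Nat.add_one_sub_one, pow_one]
  field_simp
  ring

lemma integral_comp_cayley_sq (g : ℝ → ℝ) :
    ∫ z in (0 : ℝ)..1, g (((1 - z) / (1 + z)) ^ 2) * (4 * (1 - z) / (1 + z) ^ 3) =
      ∫ t in (0 : ℝ)..1, g t := by
  have hderiv : ∀ z ∈ Icc (0 : ℝ) 1,
      HasDerivAt (fun z : ℝ => ((1 - z) / (1 + z)) ^ 2) (-(4 * (1 - z) / (1 + z) ^ 3)) z :=
    fun z hz => hasDerivAt_cayley_sq (by linarith [hz.1])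
  have hnonpos : ∀ z ∈ Ioo (0 : ℝ) 1, -(4 * (1 - z) / (1 + z) ^ 3) ≤ 0 := fun z hz =>
    neg_nonpos.2 <| div_nonneg (by linarith [hz.2]) (pow_nonneg (by linarith [hz.1]) 3)
  have hsubst := integral_comp_mul_deriv_of_deriv_nonpos (a := 0) (b := 1) (g := g)
    (fun z hz => (hderiv z (by simpa using hz)).continuousAt.continuousWithinAt)
    (fun z hz => hderiv z (Ioo_subset_Icc_self (by simpa using hz)))
    (fun z hz => hnonpos z (by simpa using hz))
  simpa [integral_symm (0 : ℝ) 1] using hsubst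

lemma normalisation_integrand_eq (p : ℝ) (hz : z ∈ Ioo (0 : ℝ) 1)
    (ht : t = ((1 - z) / (1 + z)) ^ 2) :
    (1 - ((1 - z) / (1 + z)) ^ (p / 2) * ((1 + p * z + z ^ 2) / (1 - z ^ 2))) * (1 / z) =
      ((t ^ (1 / 2 - 1 : ℝ) - t ^ (p / 4 - 1)) / (1 - t) + (1 / 2 - p / 4) * t ^ (p / 4 - 1)) *
        (4 * (1 - z) / (1 + z) ^ 3) := by
  have h0 : z ≠ 0 := hz.1.ne'
  have hadd : 1 + z ≠ 0 := by linarith [hz.1]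
  have hsub : 1 - z ≠ 0 := (sub_pos.2 hz.2).ne'
  have hw : 0 < (1 - z) / (1 + z) := div_pos (sub_pos.2 hz.2) (by linarith [hz.1])
  have hpow (s : ℝ) : t ^ (s - 1) = ((1 - z) / (1 + z)) ^ (2 * s) / ((1 - z) / (1 + z)) ^ 2 := by
    rw [ht, Real.rpow_sub_one (pow_pos hw 2).ne', ← Real.rpow_natCast_mul hw.le, Nat.cast_ofNat]
  have hden : 1 - t = 4 * z / (1 + z) ^ 2 := by
    rw [ht]
    field_simp
    ring
  have hfactor : 1 - z ^ 2 = (1 - z) * (1 + z) := by ring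
  have hhalf : (2 * (1 / 2) : ℝ) = 1 := by norm_num
  have hquarter : 2 * (p / 4) = p / 2 := by ring
  rw [hpow, hpow, hden, hfactor, hhalf, hquarter, Real.rpow_one]
  generalize ((1 - z) / (1 + z)) ^ (p / 2) = c
  field_simp
  ring

lemma normalisation_integral_eq_integral_rpow (p : ℝ) :
    ∫ z in (0 : ℝ)..1,
        (1 - ((1 - z) / (1 + z)) ^ (p / 2) * ((1 + p * z + z ^ 2) / (1 - z ^ 2))) * (1 / z) =
      ∫ t in (0 : ℝ)..1, ((t ^ (1 / 2 - 1 : ℝ) - t ^ (p / 4 - 1)) / (1 - t) +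
        (1 / 2 - p / 4) * t ^ (p / 4 - 1)) := by
  refine Eq.trans ?_ (integral_comp_cayley_sq _)
  exact integral_congr_Ioo_of_le zero_le_one fun z hz => normalisation_integrand_eq p hz rfl

end CayleySubstitution

/-- **Normalisation integral of the `q = 1` stationary density.**
For every `p > 0`,
`∫_0^1 [1 - ((1-z)/(1+z))^{p/2} (1+pz+z²)/(1-z²)] dz/z = ψ(p/4) - ψ(1/2) - 1 + 2/p`. -/
theorem normalisation_integral_q_one (p : ℝ) (hp : 0 < p) :
    ∫ z in (0:ℝ)..1,
        (1 - ((1 - z) / (1 + z)) ^ (p / 2) *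
          ((1 + p * z + z ^ 2) / (1 - z ^ 2))) * (1 / z) =
      digamma (p / 4) - digamma (1 / 2) - 1 + 2 / p := by
  have hp4 : 0 < p / 4 := by positivity
  rw [normalisation_integral_eq_integral_rpow,
    integral_add (intervalIntegrable_rpow_sub_rpow_div_one_sub hp4 one_half_pos)
      ((intervalIntegrable_rpow_sub_one hp4).const_mul _),
    intervalIntegral.integral_const_mul, integral_rpow_sub_one hp4,
    ← digamma_sub_digamma_eq_integral hp4 one_half_pos]
  field_simp
  ring
end

section
/- Let p > 0 and q > 0 with p/2 + 2q − 1 ≠ 0, let (yₙ)_{n≥0} be defined by y₀ = 1, y₁ = p·q/(2q + 1), and (n + 2)(n + 2q + 2)·y_{n+2} = p·(n + q + 1)·y_{n+1} + n·(n + 2q)·yₙ for n ≥ 0, and define F(z) := (1 − z)^{p/2 + 2q − 1}/(p/2 + 2q − 1) · ₂F₁( p/4 + q − 1/2, p/4; q + 1/2; z² ). Then for every z ∈ (0, 1): ∑_{n≥0} yₙ·zⁿ = −(1 − z)^{2(1 − q)} · ( (1 + z)/(1 − z) )^{p/2} · F'(z). -/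
/-- The Pochhammer rising factorial `(a)ₙ = a (a+1) ⋯ (a+n-1)`. -/
noncomputable def poch (a : ℝ) : ℕ → ℝ
  | 0 => 1
  | n + 1 => poch a n * (a + n)

/-- The Gauss hypergeometric function `₂F₁(a, b; c; x)`, defined for `|x| < 1`
by the convergent power series `∑ (a)ₙ (b)ₙ / (c)ₙ · xⁿ/n!`. -/
noncomputable def hyp2F1 (a b c x : ℝ) : ℝ :=
  ∑' n : ℕ, poch a n * poch b n / poch c n * x ^ n / (Nat.factorial n : ℝ)

/-! Put `s = p / 2 + 2 * q - 1` and `U = ₂F₁ (p / 4 + q - 1 / 2) (p / 4) (q + 1 / 2) (z ^ 2)`.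
The right-hand side is `Y / s`, where `Y = (1 + z) ^ (p / 2) * (s * U - (1 - z) * U')`. The two-term
recurrence for the coefficients of `U` says that `z * Y' = 2 * q * (1 + z) ^ (p / 2) * U'`. Together
with the definition of `Y` this gives
`(1 - z) * z * Y' + 2 * q * Y = 2 * q * s * (1 + z) ^ (p / 2) * U`, and differentiating once more
eliminates `U` and leaves the Heun equation for `Y`. That equation is the recurrence satisfied by
`y`, so the coefficients of `Y` are `Y 0 * y n = s * y n`. -/

section

open PowerSeries

section CommRing

variable {R : Type*} [CommRing R]

theorem coeff_X_mul_derivative (A : R⟦X⟧) (n : ℕ) : coeff n (X * d⁄dX R A) = n * coeff n A := by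
  cases n with
  | zero => simp
  | succ n => rw [coeff_succ_X_mul, coeff_derivative, mul_comm, Nat.cast_succ]

/-- The Heun operator with singular points `0`, `1`, `-1`, `∞`, acting on formal power series: the
equation for `Hl(-1, -pq; 0, 2q, 2q + 1, p/2; z)`, multiplied by `z * (1 - z ^ 2)`,
reads `heunOp p q Y = 0`. -/
noncomputable def heunOp (p q : R) (Y : R⟦X⟧) : R⟦X⟧ :=
  (1 - X ^ 2) * (X * d⁄dX R (d⁄dX R Y) + C (2 * q + 1) * d⁄dX R Y) -
    C p * (X * d⁄dX R Y + C q * Y)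

theorem coeff_zero_heunOp (p q : R) (Y : R⟦X⟧) :
    coeff 0 (heunOp p q Y) = (2 * q + 1) * coeff 1 Y - p * (q * coeff 0 Y) := by
  rw [heunOp, sub_mul, one_mul, map_sub, map_sub, map_add, coeff_X_mul_derivative, coeff_C_mul,
    coeff_derivative, pow_two, mul_assoc, coeff_zero_X_mul, coeff_C_mul, map_add,
    coeff_X_mul_derivative, coeff_C_mul]
  push_cast
  ring

theorem coeff_succ_heunOp (p q : R) (Y : R⟦X⟧) (n : ℕ) :
    coeff (n + 1) (heunOp p q Y) =
      (n + 2) * (n + 2 * q + 2) * coeff (n + 2) Y -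
        (p * (n + q + 1) * coeff (n + 1) Y + n * (n + 2 * q) * coeff n Y) := by
  set Z := X * d⁄dX R (d⁄dX R Y) + C (2 * q + 1) * d⁄dX R Y with hZ
  have coeff_Z (k : ℕ) : coeff k Z = (k + 1) * (k + 2 * q + 1) * coeff (k + 1) Y := by
    rw [hZ, map_add, coeff_X_mul_derivative, coeff_C_mul, coeff_derivative]
    ring
  have coeff_X_sq_mul_Z : coeff (n + 1) (X ^ 2 * Z) = n * (n + 2 * q) * coeff n Y := by
    rw [pow_two, mul_assoc, coeff_succ_X_mul]
    cases n with
    | zero => simp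
    | succ k => rw [coeff_succ_X_mul, coeff_Z]; push_cast; ring
  rw [heunOp, ← hZ, sub_mul, one_mul, map_sub, map_sub, coeff_X_sq_mul_Z, coeff_Z, coeff_C_mul,
    map_add, coeff_X_mul_derivative, coeff_C_mul]
  push_cast
  ring

/-- The formal counterpart of `-(1 - z) ^ (1 - s) * d/dz ((1 - z) ^ s * U z)`, free of non-integral
powers of `1 - z`. -/
noncomputable def twistedDeriv (s : R) (U : R⟦X⟧) : R⟦X⟧ :=
  C s * U - (1 - X) * d⁄dX R U

theorem coeff_twistedDeriv (s : R) (U : R⟦X⟧) (n : ℕ) :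
    coeff n (twistedDeriv s U) = (n + s) * coeff n U - (n + 1) * coeff (n + 1) U := by
  rw [twistedDeriv, sub_mul, one_mul, map_sub, map_sub, coeff_C_mul, coeff_X_mul_derivative,
    coeff_derivative]
  ring

theorem X_mul_derivative_twistedDeriv {b q : R} {U : R⟦X⟧} (hU1 : coeff 1 U = 0)
    (hU : ∀ n : ℕ, (n + 2) * (n + 2 * q + 1) * coeff (n + 2) U =
      (n + (b + 2 * q - 1)) * (n + b) * coeff n U) :
    (1 + X) * (X * d⁄dX R (twistedDeriv (b + 2 * q - 1) U)) +
        X * (C b * twistedDeriv (b + 2 * q - 1) U) =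
      (1 + X) * (C (2 * q) * d⁄dX R U) := by
  ext n
  simp only [add_mul, one_mul, map_add]
  cases n with
  | zero =>
    simp only [coeff_zero_X_mul, coeff_C_mul, coeff_derivative, hU1]
    simp
  | succ n =>
    simp only [coeff_succ_X_mul, coeff_C_mul, coeff_X_mul_derivative, coeff_derivative,
      coeff_twistedDeriv]
    push_cast
    linear_combination -hU n

theorem X_mul_derivative_mul_of_one_add_X_mul_derivative {b c : R} {B G V : R⟦X⟧}
    (hB : (1 + X) * d⁄dX R B = C b * B)
    (hG : (1 + X) * (X * d⁄dX R G) + X * (C b * G) = (1 + X) * (C c * V)) :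
    X * d⁄dX R (B * G) = C c * (B * V) := by
  have isUnit_one_add_X : IsUnit (1 + X : R⟦X⟧) := isUnit_iff_constantCoeff.mpr (by simp)
  apply isUnit_one_add_X.mul_left_cancel
  rw [Derivation.leibniz, smul_eq_mul, smul_eq_mul]
  linear_combination X * G * hB + B * hG

theorem heunOp_mul_twistedDeriv {b q : R} {B U : R⟦X⟧}
    (hB : (1 + X) * d⁄dX R B = C b * B)
    (hY : X * d⁄dX R (B * twistedDeriv (b + 2 * q - 1) U) = C (2 * q) * (B * d⁄dX R U)) :
    heunOp (2 * b) q (B * twistedDeriv (b + 2 * q - 1) U) = 0 := by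
  set s := b + 2 * q - 1 with hs
  set Y := B * twistedDeriv s U with hY_def
  have first_order : (1 - X) * (X * d⁄dX R Y) + C (2 * q) * Y = C (2 * q) * C s * (B * U) := by
    rw [hY, hY_def, twistedDeriv]
    ring
  have derivative_first_order := congrArg (d⁄dX R) first_order
  simp only [map_add, map_sub, Derivation.leibniz, Derivation.map_one_eq_zero, derivative_X,
    derivative_C, smul_eq_mul] at derivative_first_order
  have hCs : C s = C b + C (2 * q) - 1 := by simp [hs]
  have h2 : C (2 * b) = C b + C b := by rw [two_mul, map_add]
  have h2q : C (2 * q) = C q + C q := by rw [two_mul, map_add]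
  rw [heunOp, map_add, map_one, h2]
  rw [hCs] at first_order derivative_first_order
  rw [h2q] at first_order derivative_first_order hY ⊢
  -- Multiplied by `1 + X`, the derivative of `first_order` involves, apart from `Y`, only `B * U`
  -- and `B * U'`, which are eliminated by `first_order` and `hY`.
  linear_combination (1 + X) * derivative_first_order
    + (C q + C q) * (C b + (C q + C q) - 1) * U * hB
    - C b * first_order - (1 + X) * (C b + (C q + C q) - 1) * hY

theorem one_add_X_mul_derivative_binomialSeries [BinomialRing R] (b : R) :
    (1 + X) * d⁄dX R (PowerSeries.binomialSeries R b) = C b * PowerSeries.binomialSeries R b := by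
  ext n
  have choose_succ : Ring.choose b (n + 1) * (n + 1) = (b - n) * Ring.choose b n := by
    have := Ring.choose_smul_choose b n.le_succ
    rw [Nat.choose_succ_self_right, Nat.succ_sub (le_refl n), Nat.sub_self, Ring.choose_one_right,
      nsmul_eq_mul, Nat.cast_succ] at this
    linear_combination this
  rw [add_mul, one_mul, map_add, coeff_X_mul_derivative, coeff_derivative, coeff_C_mul,
    PowerSeries.binomialSeries_coeff, PowerSeries.binomialSeries_coeff, smul_eq_mul, smul_eq_mul,
    mul_one, mul_one, choose_succ]
  ring

end CommRing

section Field

variable {K : Type*} [Field K]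

/-- The Taylor series of `z ↦ ₂F₁ a b c (z ^ 2)` at `0`. -/
noncomputable def hypergeometricSqSeries (a b c : K) : K⟦X⟧ :=
  expand 2 two_ne_zero (mk (ordinaryHypergeometricCoefficient a b c))

theorem coeff_zero_hypergeometricSqSeries (a b c : K) :
    coeff 0 (hypergeometricSqSeries a b c) = 1 := by
  simp [hypergeometricSqSeries, ordinaryHypergeometricCoefficient]

theorem coeff_one_hypergeometricSqSeries (a b c : K) :
    coeff 1 (hypergeometricSqSeries a b c) = 0 :=
  coeff_expand_of_not_dvd _ _ _ (by simp)

variable [CharZero K]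

theorem ordinaryHypergeometricCoefficient_succ (a b : K) {c : K} {n : ℕ} (hc : c + n ≠ 0) :
    (n + 1) * (c + n) * ordinaryHypergeometricCoefficient a b c (n + 1) =
      (a + n) * (b + n) * ordinaryHypergeometricCoefficient a b c n := by
  have hn : (n : K) + 1 ≠ 0 := n.cast_add_one_ne_zero
  simp only [ordinaryHypergeometricCoefficient, ascPochhammer_succ_eval, Nat.factorial_succ,
    mul_inv, Nat.cast_mul, Nat.cast_succ]
  field_simp

theorem coeff_add_two_hypergeometricSqSeries (a b : K) {c : K} (hc : ∀ n : ℕ, c + n ≠ 0) (n : ℕ) :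
    (n + 2) * (n + 2 * c) * coeff (n + 2) (hypergeometricSqSeries a b c) =
      (n + 2 * a) * (n + 2 * b) * coeff n (hypergeometricSqSeries a b c) := by
  rcases Nat.even_or_odd' n with ⟨k, rfl | rfl⟩
  · have := ordinaryHypergeometricCoefficient_succ a b (hc k)
    rw [hypergeometricSqSeries, coeff_expand_mul, show 2 * k + 2 = 2 * (k + 1) by ring,
      coeff_expand_mul, coeff_mk, coeff_mk]
    push_cast
    linear_combination 4 * this
  · rw [hypergeometricSqSeries, coeff_expand_of_not_dvd _ _ _ (by lia),
      coeff_expand_of_not_dvd _ _ _ (by lia), mul_zero, mul_zero]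

theorem coeff_eq_coeff_zero_mul_of_heunOp_eq_zero {p q : K}
    (hq : ∀ n : ℕ, 2 * q + 1 + n ≠ 0) {Y : K⟦X⟧} (hY : heunOp p q Y = 0)
    {y : ℕ → K} (h0 : y 0 = 1) (h1 : y 1 = p * q / (2 * q + 1))
    (hrec : ∀ n : ℕ, ((n : K) + 2) * (n + 2 * q + 2) * y (n + 2) =
      p * (n + q + 1) * y (n + 1) + n * (n + 2 * q) * y n) (n : ℕ) :
    coeff n Y = coeff 0 Y * y n := by
  induction n using Nat.twoStepInduction with
  | zero => rw [h0, mul_one]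
  | one =>
    have hq0 : 2 * q + 1 ≠ 0 := by simpa using hq 0
    have hY1 := coeff_zero_heunOp p q Y
    rw [hY, map_zero] at hY1
    rw [h1, mul_div_assoc', eq_div_iff hq0]
    linear_combination -hY1
  | more n ih ih' =>
    have hYn := coeff_succ_heunOp p q Y n
    rw [hY, map_zero, ih, ih'] at hYn
    have hn : (n : K) + 2 ≠ 0 := by exact_mod_cast (n + 1).succ_ne_zero
    have hqn : (n : K) + 2 * q + 2 ≠ 0 := by
      convert hq (n + 1) using 1
      push_cast
      ring
    apply mul_left_cancel₀ (mul_ne_zero hn hqn)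
    linear_combination -hYn - coeff 0 Y * hrec n

/-- The multiple by `p / 2 + 2 * q - 1` of the Taylor series of the Heun function, written as
`(1 + z) ^ (p / 2)` times the twisted derivative of a hypergeometric function of `z ^ 2`. -/
noncomputable def heunSeries (p q : K) : K⟦X⟧ :=
  PowerSeries.binomialSeries K (p / 2) * twistedDeriv (p / 2 + 2 * q - 1)
    (hypergeometricSqSeries (p / 4 + q - 1 / 2) (p / 4) (q + 1 / 2))

theorem coeff_zero_heunSeries (p q : K) : coeff 0 (heunSeries p q) = p / 2 + 2 * q - 1 := by
  rw [heunSeries, coeff_zero_eq_constantCoeff_apply, map_mul,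
    PowerSeries.binomialSeries_constantCoeff, one_mul, ← coeff_zero_eq_constantCoeff_apply,
    coeff_twistedDeriv, coeff_zero_hypergeometricSqSeries, coeff_one_hypergeometricSqSeries]
  simp

theorem heunOp_heunSeries {p q : K} (hq : ∀ n : ℕ, 2 * q + 1 + n ≠ 0) :
    heunOp p q (heunSeries p q) = 0 := by
  have hc (n : ℕ) : q + 1 / 2 + n ≠ 0 := fun h ↦ hq (2 * n) <| by
    push_cast
    linear_combination 2 * h
  have hU (n : ℕ) := coeff_add_two_hypergeometricSqSeries (p / 4 + q - 1 / 2) (p / 4) hc n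
  have hB := one_add_X_mul_derivative_binomialSeries (p / 2)
  have heun := heunOp_mul_twistedDeriv (q := q) hB <|
    X_mul_derivative_mul_of_one_add_X_mul_derivative hB <|
      X_mul_derivative_twistedDeriv (coeff_one_hypergeometricSqSeries _ _ _) fun n ↦ by
        linear_combination hU n
  rwa [mul_div_cancel₀ p two_ne_zero] at heun

end Field

section Summation

variable {𝕜 : Type*} [RCLike 𝕜]

/-- Evaluation of a formal power series at a point: the series `A` converges at `z`
with sum `v`. -/
def SumsTo (A : 𝕜⟦X⟧) (z v : 𝕜) : Prop :=
  HasSum (fun n ↦ coeff n A * z ^ n) v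

theorem SumsTo.sub {A B : 𝕜⟦X⟧} {z v w : 𝕜} (hA : SumsTo A z v) (hB : SumsTo B z w) :
    SumsTo (A - B) z (v - w) := by
  simpa only [SumsTo, map_sub, sub_mul] using HasSum.sub hA hB

theorem SumsTo.mul {A B : 𝕜⟦X⟧} {z v w : 𝕜} (hA : SumsTo A z v) (hB : SumsTo B z w) :
    SumsTo (A * B) z (v * w) := by
  have coeff_mul_pow (n : ℕ) : coeff n (A * B) * z ^ n =
      ∑ kl ∈ Finset.HasAntidiagonal.antidiagonal n,
        coeff kl.1 A * z ^ kl.1 * (coeff kl.2 B * z ^ kl.2) := by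
    rw [coeff_mul, Finset.sum_mul]
    refine Finset.sum_congr rfl fun kl hkl ↦ ?_
    rw [← Finset.HasAntidiagonal.mem_antidiagonal.mp hkl, pow_add]
    ring
  have summable_cauchy :=
    (summable_norm_sum_mul_antidiagonal_of_summable_norm hA.summable.norm hB.summable.norm).of_norm
  have tsum_cauchy := tsum_mul_tsum_eq_tsum_sum_antidiagonal_of_summable_norm
    hA.summable.norm hB.summable.norm
  rw [hA.tsum_eq, hB.tsum_eq] at tsum_cauchy
  simpa only [SumsTo, coeff_mul_pow, tsum_cauchy] using summable_cauchy.hasSum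

theorem sumsTo_C (c z : 𝕜) : SumsTo (C c) z c := by
  simpa [SumsTo] using hasSum_single (f := fun n ↦ coeff n (C c) * z ^ n) 0 fun n hn ↦ by
    rw [coeff_C, if_neg hn, zero_mul]

theorem sumsTo_X (z : 𝕜) : SumsTo X z z := by
  simpa [SumsTo] using hasSum_single (f := fun n ↦ coeff n (X : 𝕜⟦X⟧) * z ^ n) 1 fun n hn ↦ by
    rw [coeff_X, if_neg hn, zero_mul]

theorem SumsTo.expand {A : 𝕜⟦X⟧} {k : ℕ} (hk : k ≠ 0) {z v : 𝕜} (hA : SumsTo A (z ^ k) v) :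
    SumsTo (expand k hk A) z v := by
  have term_eq_zero (n : ℕ) (hn : n ∉ Set.range (k * ·)) :
      coeff n (PowerSeries.expand k hk A) * z ^ n = 0 := by
    rw [coeff_expand_of_not_dvd _ _ _ fun ⟨m, hm⟩ ↦ hn ⟨m, hm.symm⟩, zero_mul]
  refine (Function.Injective.hasSum_iff (mul_right_injective₀ hk) term_eq_zero).mp ?_
  simpa only [SumsTo, Function.comp_def, coeff_expand_mul, pow_mul] using hA

theorem sumsTo_of_hasFPowerSeriesOnBall {f : 𝕜 → 𝕜} {a : ℕ → 𝕜} {r : ENNReal}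
    (hf : HasFPowerSeriesOnBall f (.ofScalars 𝕜 a) 0 r) {z : 𝕜} (hz : z ∈ Metric.eball 0 r) :
    SumsTo (mk a) z (f z) := by
  simpa [SumsTo, mul_comm] using hf.hasSum hz

theorem hasFPowerSeriesOnBall_of_sumsTo {f : 𝕜 → 𝕜} {A : 𝕜⟦X⟧} {r : ENNReal} (hr : 0 < r)
    (hA : ∀ z ∈ Metric.eball 0 r, SumsTo A z (f z)) :
    HasFPowerSeriesOnBall f (.ofScalars 𝕜 fun n ↦ coeff n A) 0 r where
  r_le := ENNReal.le_of_forall_nnreal_lt fun t ht ↦ by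
    have hmem : ((t : ℝ) : 𝕜) ∈ Metric.eball 0 r := by
      simpa [enorm_eq_nnnorm] using ht
    refine FormalMultilinearSeries.le_radius_of_summable _ ?_
    simpa [FormalMultilinearSeries.ofScalars_norm] using (hA _ hmem).summable.norm
  r_pos := hr
  hasSum hz := by simpa [SumsTo, mul_comm] using hA _ hz

theorem sumsTo_derivative {f : 𝕜 → 𝕜} {A : 𝕜⟦X⟧} {r : ENNReal}
    (hA : ∀ z ∈ Metric.eball 0 r, SumsTo A z (f z)) {z : 𝕜} (hz : z ∈ Metric.eball 0 r) :
    SumsTo (d⁄dX 𝕜 A) z (deriv f z) := by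
  have hf := hasFPowerSeriesOnBall_of_sumsTo (Metric.pos_of_mem_eball hz) hA
  have hsum := (hf.fderiv.hasSum hz).mapL (ContinuousLinearMap.apply 𝕜 𝕜 1)
  simpa [SumsTo, coeff_derivative, mul_comm] using hsum

theorem differentiableAt_of_sumsTo {f : 𝕜 → 𝕜} {A : 𝕜⟦X⟧} {r : ENNReal}
    (hA : ∀ z ∈ Metric.eball 0 r, SumsTo A z (f z)) {z : 𝕜} (hz : z ∈ Metric.eball 0 r) :
    DifferentiableAt 𝕜 f z :=
  have hf := hasFPowerSeriesOnBall_of_sumsTo (Metric.pos_of_mem_eball hz) hA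
  hf.differentiableOn.differentiableAt (Metric.isOpen_eball.mem_nhds hz)

theorem sumsTo_twistedDeriv {f : 𝕜 → 𝕜} {U : 𝕜⟦X⟧} {r : ENNReal}
    (hU : ∀ z ∈ Metric.eball 0 r, SumsTo U z (f z)) (s : 𝕜) {z : 𝕜} (hz : z ∈ Metric.eball 0 r) :
    SumsTo (twistedDeriv s U) z (s * f z - (1 - z) * deriv f z) :=
  ((sumsTo_C s z).mul (hU z hz)).sub
    (((sumsTo_C 1 z).sub (sumsTo_X z)).mul (sumsTo_derivative hU hz))

theorem one_le_radius_ordinaryHypergeometricSeries (a b c : 𝕜) :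
    1 ≤ (ordinaryHypergeometricSeries 𝕜 a b c).radius := by
  by_cases habc : ∀ k : ℕ, (k : 𝕜) ≠ -a ∧ (k : 𝕜) ≠ -b ∧ (k : 𝕜) ≠ -c
  · exact (ordinaryHypergeometricSeries_radius_eq_one 𝕜 a b c habc).ge
  · simp only [not_forall, not_and_or, not_not, eq_comm (a := ((_ : ℕ) : 𝕜)),
      neg_eq_iff_eq_neg] at habc
    rcases habc with ⟨k, rfl | rfl | rfl⟩
    · simp [ordinaryHypergeometric_radius_top_of_neg_nat₁]
    · simp [ordinaryHypergeometric_radius_top_of_neg_nat₂]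
    · simp [ordinaryHypergeometric_radius_top_of_neg_nat₃]

theorem sumsTo_ordinaryHypergeometric (a b c : 𝕜) {z : 𝕜} (hz : z ∈ Metric.eball 0 1) :
    SumsTo (mk (ordinaryHypergeometricCoefficient a b c)) z (₂F₁ a b c z) := by
  have hradius := one_le_radius_ordinaryHypergeometricSeries a b c
  exact sumsTo_of_hasFPowerSeriesOnBall
    (((ordinaryHypergeometricSeries 𝕜 a b c).hasFPowerSeriesOnBall
      (one_pos.trans_le hradius)).mono one_pos hradius) hz

theorem sumsTo_hypergeometricSqSeries (a b c : 𝕜) {z : 𝕜} (hz : z ∈ Metric.eball 0 1) :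
    SumsTo (hypergeometricSqSeries a b c) z (₂F₁ a b c (z ^ 2)) := by
  refine (sumsTo_ordinaryHypergeometric a b c ?_).expand two_ne_zero
  rw [mem_eball_zero_iff] at hz ⊢
  rw [enorm_pow]
  exact pow_lt_one₀ zero_le hz two_ne_zero

end Summation

theorem sumsTo_binomialSeries (b : ℝ) {z : ℝ} (hz : z ∈ Metric.eball 0 1) :
    SumsTo (PowerSeries.binomialSeries ℝ b) z ((1 + z) ^ b) := by
  simpa [SumsTo, PowerSeries.binomialSeries_coeff] using
    sumsTo_of_hasFPowerSeriesOnBall Real.one_add_rpow_hasFPowerSeriesOnBall_zero hz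

theorem sumsTo_heunSeries (p q : ℝ) {z : ℝ} (hz : z ∈ Metric.eball 0 1) :
    letI f := fun w : ℝ ↦ ₂F₁ (p / 4 + q - 1 / 2) (p / 4) (q + 1 / 2) (w ^ 2)
    SumsTo (heunSeries p q) z
      ((1 + z) ^ (p / 2) * ((p / 2 + 2 * q - 1) * f z - (1 - z) * deriv f z)) :=
  (sumsTo_binomialSeries (p / 2) hz).mul <|
    sumsTo_twistedDeriv (fun _ hw ↦ sumsTo_hypergeometricSqSeries _ _ _ hw) _ hz

theorem hyp2F1_eq_ordinaryHypergeometric (a b c : ℝ) :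
    hyp2F1 a b c = ₂F₁ a b c := by
  have poch_eq (a : ℝ) (n : ℕ) : poch a n = (ascPochhammer ℝ n).eval a := by
    induction n with
    | zero => simp [poch]
    | succ n ih => rw [poch, ascPochhammer_succ_eval, ih]
  ext x
  rw [hyp2F1, ordinaryHypergeometric_eq_tsum]
  refine tsum_congr fun n ↦ ?_
  rw [poch_eq, poch_eq, poch_eq, smul_eq_mul]
  ring

theorem deriv_one_sub_rpow_div_mul {f : ℝ → ℝ} {s z : ℝ} (hs : s ≠ 0) (hz : z < 1)
    (hf : DifferentiableAt ℝ f z) :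
    deriv (fun w ↦ (1 - w) ^ s / s * f w) z =
      -(1 - z) ^ (s - 1) * ((s * f z - (1 - z) * deriv f z) / s) := by
  have h1z : 0 < 1 - z := sub_pos.mpr hz
  have hpow : HasDerivAt (fun w : ℝ ↦ (1 - w) ^ s / s) (-(1 - z) ^ (s - 1)) z :=
    ((((hasDerivAt_id' z).const_sub 1).rpow_const (.inl h1z.ne')).div_const s).congr_deriv
      (by field)
  rw [show (fun w ↦ (1 - w) ^ s / s * f w) = (fun w ↦ (1 - w) ^ s / s) * f from rfl,
    (hpow.mul hf.hasDerivAt).deriv]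
  have : (1 - z) ^ s = (1 - z) ^ (s - 1) * (1 - z) := by
    rw [← Real.rpow_add_one h1z.ne', sub_add_cancel]
  rw [this]
  field

theorem one_sub_rpow_mul_div_rpow_mul_one_sub_rpow (b q : ℝ) {z : ℝ} (hz : z ∈ Set.Ioo (-1) 1) :
    (1 - z) ^ (2 * (1 - q)) * ((1 + z) / (1 - z)) ^ b * (1 - z) ^ (b + 2 * q - 1 - 1) =
      (1 + z) ^ b := by
  have h1z : 0 < 1 - z := sub_pos.mpr hz.2
  have h1z' : 0 < 1 + z := by linarith [hz.1]
  have exponents : (1 - z) ^ (2 * (1 - q)) * (1 - z) ^ (b + 2 * q - 1 - 1) = (1 - z) ^ b := by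
    rw [← Real.rpow_add h1z]
    ring_nf
  rw [mul_right_comm, exponents, Real.div_rpow h1z'.le h1z.le,
    mul_div_cancel₀ _ (Real.rpow_pos_of_pos h1z b).ne']

theorem heun_eq_hypergeometric_general
    (p q : ℝ) (hq : ∀ n : ℕ, 2 * q + 1 + n ≠ 0) (hpq : p / 2 + 2 * q - 1 ≠ 0)
    (y : ℕ → ℝ)
    (h0 : y 0 = 1) (h1 : y 1 = p * q / (2 * q + 1))
    (hrec : ∀ n : ℕ,
      ((n : ℝ) + 2) * ((n : ℝ) + 2 * q + 2) * y (n + 2) =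
        p * ((n : ℝ) + q + 1) * y (n + 1) + (n : ℝ) * ((n : ℝ) + 2 * q) * y n)
    (F : ℝ → ℝ)
    (hF : F = fun z =>
      (1 - z) ^ (p / 2 + 2 * q - 1) / (p / 2 + 2 * q - 1) *
        hyp2F1 (p / 4 + q - 1 / 2) (p / 4) (q + 1 / 2) (z ^ 2)) :
    ∀ z ∈ Set.Ioo (-1 : ℝ) 1,
      (∑' n : ℕ, y n * z ^ n) =
        -(1 - z) ^ (2 * (1 - q)) * ((1 + z) / (1 - z)) ^ (p / 2) * deriv F z := by
  intro z hz
  have mem_eball : z ∈ Metric.eball 0 1 := by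
    rw [← ENNReal.ofReal_one, Metric.eball_ofReal, mem_ball_zero_iff]
    exact abs_lt.mpr hz
  have coeff_heunSeries (n : ℕ) : coeff n (heunSeries p q) = (p / 2 + 2 * q - 1) * y n := by
    rw [coeff_eq_coeff_zero_mul_of_heunOp_eq_zero hq (heunOp_heunSeries hq) h0 h1 hrec,
      coeff_zero_heunSeries]
  have tsum_y := (sumsTo_heunSeries p q mem_eball).tsum_eq
  simp only [coeff_heunSeries, mul_assoc, tsum_mul_left] at tsum_y
  have differentiableAt_U := differentiableAt_of_sumsTo
    (fun _ hw ↦ sumsTo_hypergeometricSqSeries (p / 4 + q - 1 / 2) (p / 4) (q + 1 / 2) hw) mem_eball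
  rw [hF, hyp2F1_eq_ordinaryHypergeometric, deriv_one_sub_rpow_div_mul hpq hz.2 differentiableAt_U,
    eq_div_of_mul_eq hpq ((mul_comm _ _).trans tsum_y),
    ← one_sub_rpow_mul_div_rpow_mul_one_sub_rpow (p / 2) q hz]
  ring

end

/-- **Compact hypergeometric representation of the Heun function:**
with `F(z) = (1-z)^{p/2+2q-1}/(p/2+2q-1) · ₂F₁(p/4+q-1/2, p/4; q+1/2; z²)`,
the Heun series `∑ yₙ zⁿ` equals
`-(1-z)^{2(1-q)} ((1+z)/(1-z))^{p/2} F'(z)` on `(0,1)`. -/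
theorem heun_eq_hypergeometric
    (p q : ℝ) (hp : 0 < p) (hq : 0 < q) (hpq : p / 2 + 2 * q - 1 ≠ 0)
    (y : ℕ → ℝ)
    (h0 : y 0 = 1) (h1 : y 1 = p * q / (2 * q + 1))
    (hrec : ∀ n : ℕ,
      ((n : ℝ) + 2) * ((n : ℝ) + 2 * q + 2) * y (n + 2) =
        p * ((n : ℝ) + q + 1) * y (n + 1) + (n : ℝ) * ((n : ℝ) + 2 * q) * y n)
    (F : ℝ → ℝ)
    (hF : F = fun z =>
      (1 - z) ^ (p / 2 + 2 * q - 1) / (p / 2 + 2 * q - 1) *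
        hyp2F1 (p / 4 + q - 1 / 2) (p / 4) (q + 1 / 2) (z ^ 2)) :
    ∀ z ∈ Set.Ioo (0:ℝ) 1,
      (∑' n : ℕ, y n * z ^ n) =
        -(1 - z) ^ (2 * (1 - q)) * ((1 + z) / (1 - z)) ^ (p / 2) * deriv F z := by
  intro z hz
  exact heun_eq_hypergeometric_general p q (fun n ↦ by positivity) hpq y h0 h1 hrec F hF z
    (Set.Ioo_subset_Ioo_left (by norm_num) hz)
end
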